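/- Let N ≥ 1, α, β > −1, and let z_1 < ... < z_N be the ordered zeros of the Jacobi polynomial P_N^{(α,β)}. Let S be the N×N matrix with entries s_{j,j} = Σ_{l≠j} 1/(z_j−z_l)² + (α+1)/2 · 1/(1−z_j)² + (β+1)/2 · 1/(1+z_j)² and s_{i,j} = −1/(z_i−z_j)² for i ≠ j. Then det(S) = (N!/2^{3N}) · ((N+α+β+1)_N)³ / ((α+1)_N (β+1)_N), where (x)_N = x(x+1)···(x+N−1) denotes the Pochhammer symbol. -/

import Mathlib

open MeasureTheory Filter Real Finset Topology

/-!
Orthogonality and the self-adjointness of the Jacobi operator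
`L q = (1 - x²) q'' + (β - α - (α + β + 2) x) q' + N (N + α + β + 1) q` give `L P = 0`.

The determinant of `L` on polynomials of degree `< N` is computed in two bases. In the monomials
`L` is triangular with diagonal entries `(N - k) (N + α + β + 1 + k)`. In the Lagrange basis at
the zeros of `P`, the equation `L P = 0` makes the matrix of `L` conjugate, by a diagonal matrix, to
`diag (2 (1 - z_j²)) * S`. This gives `det S` in terms of `∏ (1 - z_j²)`, that is, of the values of
the monic multiple of `P` at `±1`. There the leading coefficient of `L` vanishes, so the Taylor
coefficients of `P` at `±1` satisfy a two-term recurrence, which determines both values.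
-/

section SecondOrderOperator

open Polynomial

variable {R : Type*} [CommRing R] {σ τ : R[X]} {c : R}

/-- The differential operator `q ↦ σ q'' + τ q' + c q` on polynomials. -/
noncomputable def secondOrderOperator (σ τ : R[X]) (c : R) : R[X] →ₗ[R] R[X] :=
  LinearMap.mulLeft R σ ∘ₗ derivative ∘ₗ derivative + LinearMap.mulLeft R τ ∘ₗ derivative +
    c • LinearMap.id

/-- The coefficient of `X ^ k` in `secondOrderOperator σ τ c (X ^ k)` when `deg σ ≤ 2` and
`deg τ ≤ 1`, i.e. the `k`-th diagonal entry of the operator in the monomial basis. -/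
noncomputable def secondOrderSymbol (σ τ : R[X]) (c : R) (k : ℕ) : R :=
  c + k * τ.coeff 1 + k * (k - 1) * σ.coeff 2

theorem secondOrderOperator_apply (σ τ : R[X]) (c : R) (q : R[X]) :
    secondOrderOperator σ τ c q =
      σ * derivative (derivative q) + τ * derivative q + C c * q := by
  simp [secondOrderOperator, smul_eq_C_mul]

theorem secondOrderOperator_X_sub_C_mul (σ τ : R[X]) (c a : R) (q : R[X]) :
    secondOrderOperator σ τ c ((X - C a) * q) =
      (X - C a) * secondOrderOperator σ τ c q + 2 * σ * derivative q + τ * q := by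
  simp only [secondOrderOperator_apply, derivative_mul, derivative_add, derivative_X_sub_C,
    derivative_one]
  ring

theorem taylor_secondOrderOperator (σ τ : R[X]) (c r : R) (q : R[X]) :
    taylor r (secondOrderOperator σ τ c q) =
      secondOrderOperator (taylor r σ) (taylor r τ) c (taylor r q) := by
  simp [secondOrderOperator_apply, taylor_apply, derivative_comp]

theorem coeff_secondOrderOperator (hσ : σ.natDegree ≤ 2) (hτ : τ.natDegree ≤ 1) (q : R[X])
    (i : ℕ) :
    (secondOrderOperator σ τ c q).coeff i =
      (i + 2) * (i + 1) * σ.coeff 0 * q.coeff (i + 2) +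
        (i + 1) * (i * σ.coeff 1 + τ.coeff 0) * q.coeff (i + 1) +
        secondOrderSymbol σ τ c i * q.coeff i := by
  have hσ_eq : σ = C (σ.coeff 2) * X ^ 2 + C (σ.coeff 1) * X + C (σ.coeff 0) := by
    simpa [sum_range_succ, add_comm, ← add_assoc] using
      σ.as_sum_range_C_mul_X_pow' (Nat.lt_succ_of_le hσ)
  have hτ_eq := eq_X_add_C_of_natDegree_le_one hτ
  have expand : secondOrderOperator σ τ c q =
      C (σ.coeff 2) * (X * (X * derivative (derivative q))) +
        C (σ.coeff 1) * (X * derivative (derivative q)) +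
        C (σ.coeff 0) * derivative (derivative q) +
        C (τ.coeff 1) * (X * derivative q) + C (τ.coeff 0) * derivative q + C c * q := by
    rw [secondOrderOperator_apply]
    conv_lhs => rw [hσ_eq, hτ_eq]
    ring
  rw [expand, secondOrderSymbol]
  rcases i with _ | _ | i <;>
  · simp only [coeff_add, coeff_C_mul, coeff_X_mul, coeff_X_mul_zero, coeff_derivative]
    push_cast
    ring

theorem natDegree_secondOrderOperator_le (hσ : σ.natDegree ≤ 2) (hτ : τ.natDegree ≤ 1)
    (q : R[X]) : (secondOrderOperator σ τ c q).natDegree ≤ q.natDegree := by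
  refine natDegree_le_iff_coeff_eq_zero.2 fun i hi ↦ ?_
  rw [coeff_secondOrderOperator hσ hτ, coeff_eq_zero_of_natDegree_lt hi,
    coeff_eq_zero_of_natDegree_lt (hi.trans (Nat.lt_succ_self i)),
    coeff_eq_zero_of_natDegree_lt (hi.trans (by lia : i < i + 2))]
  ring

theorem natDegree_secondOrderOperator_lt (hσ : σ.natDegree ≤ 2) (hτ : τ.natDegree ≤ 1)
    {q : R[X]} (hq : q.natDegree ≠ 0) (hsymbol : secondOrderSymbol σ τ c q.natDegree = 0) :
    (secondOrderOperator σ τ c q).natDegree < q.natDegree := by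
  have top_coeff : (secondOrderOperator σ τ c q).coeff q.natDegree = 0 := by
    rw [coeff_secondOrderOperator hσ hτ, hsymbol,
      coeff_eq_zero_of_natDegree_lt (by lia : q.natDegree < q.natDegree + 1),
      coeff_eq_zero_of_natDegree_lt (by lia : q.natDegree < q.natDegree + 2)]
    ring
  refine (natDegree_secondOrderOperator_le hσ hτ q).lt_of_ne fun h ↦ hq ?_
  rw [← h, coeff_natDegree, leadingCoeff_eq_zero] at top_coeff
  rw [← h, top_coeff, natDegree_zero]

theorem coeff_secondOrderOperator_X_pow (hσ : σ.natDegree ≤ 2) (hτ : τ.natDegree ≤ 1) (k : ℕ) :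
    (secondOrderOperator σ τ c (X ^ k)).coeff k = secondOrderSymbol σ τ c k := by
  simp [coeff_secondOrderOperator hσ hτ, coeff_X_pow]

theorem mul_prod_range_eq_of_forall_mul_eq {M : Type*} [CommMonoid M] (u a b : ℕ → M) (n : ℕ)
    (h : ∀ k < n, u k * a k = u (k + 1) * b k) :
    u 0 * ∏ k ∈ range n, a k = u n * ∏ k ∈ range n, b k := by
  induction n with
  | zero => simp
  | succ n ih =>
    calc u 0 * ∏ k ∈ range (n + 1), a k
        = (u 0 * ∏ k ∈ range n, a k) * a n := by rw [prod_range_succ, mul_assoc]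
      _ = (u n * a n) * ∏ k ∈ range n, b k := by
        rw [ih fun k hk ↦ h k (by lia), mul_right_comm]
      _ = u (n + 1) * ∏ k ∈ range (n + 1), b k := by
        rw [h n (by lia), prod_range_succ, mul_assoc, mul_comm (b n)]

theorem coeff_taylor_of_natDegree_le {p : R[X]} {n : ℕ} (hp : p.natDegree ≤ n) (r : R) :
    (taylor r p).coeff n = p.coeff n := by
  rcases hp.eq_or_lt with rfl | hlt
  · exact coeff_taylor_natDegree r p
  · rw [coeff_eq_zero_of_natDegree_lt hlt,
      coeff_eq_zero_of_natDegree_lt (by rwa [natDegree_taylor])]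

theorem secondOrderSymbol_taylor (hσ : σ.natDegree ≤ 2) (hτ : τ.natDegree ≤ 1) (r : R) :
    secondOrderSymbol (taylor r σ) (taylor r τ) c = secondOrderSymbol σ τ c := by
  ext k
  simp only [secondOrderSymbol, coeff_taylor_of_natDegree_le hσ, coeff_taylor_of_natDegree_le hτ]

-- At a root of `σ` the recurrence for the Taylor coefficients of a solution has only two terms.
theorem eval_mul_prod_secondOrderSymbol (hσ : σ.natDegree ≤ 2) (hτ : τ.natDegree ≤ 1) {r : R}
    (hr : σ.eval r = 0) {q : R[X]} (hq : secondOrderOperator σ τ c q = 0) :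
    q.eval r * ∏ k ∈ range q.natDegree, secondOrderSymbol σ τ c k =
      q.leadingCoeff * (q.natDegree.factorial *
        ∏ k ∈ range q.natDegree, -(k * (derivative σ).eval r + τ.eval r)) := by
  have recurrence (k : ℕ) : (taylor r q).coeff k * secondOrderSymbol σ τ c k =
      (taylor r q).coeff (k + 1) *
        (((k + 1 : ℕ) : R) * -(k * (derivative σ).eval r + τ.eval r)) := by
    have h := congrArg (fun p ↦ (taylor r p).coeff k) hq
    simp only [taylor_secondOrderOperator, map_zero, coeff_zero] at h
    rw [coeff_secondOrderOperator (by rwa [natDegree_taylor]) (by rwa [natDegree_taylor]),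
      secondOrderSymbol_taylor hσ hτ, taylor_coeff_zero, taylor_coeff_zero, taylor_coeff_one,
      hr] at h
    push_cast
    linear_combination h
  have telescoped := mul_prod_range_eq_of_forall_mul_eq _ _ _ q.natDegree fun k _ ↦ recurrence k
  rwa [taylor_coeff_zero, coeff_taylor_natDegree, prod_mul_distrib, ← Nat.cast_prod,
    prod_range_add_one_eq_factorial] at telescoped

end SecondOrderOperator

section Nodal

open Polynomial Lagrange

variable {F ι : Type*} [Field F] {s : Finset ι} {v : ι → F}

theorem eval_nodal_erase [DecidableEq ι] {x : F} {i : ι} (hi : i ∈ s) (hx : x ≠ v i) :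
    (nodal (s.erase i) v).eval x = (nodal s v).eval x * (1 / (x - v i)) := by
  have := sub_ne_zero.2 hx
  rw [nodal_eq_mul_nodal_erase hi]
  simp only [eval_mul, eval_sub, eval_X, eval_C]
  field_simp

theorem eval_derivative_nodal {x : F} (hx : ∀ i ∈ s, x ≠ v i) :
    (derivative (nodal s v)).eval x = (nodal s v).eval x * ∑ i ∈ s, 1 / (x - v i) := by
  classical
  rw [derivative_nodal, eval_finsetSum, mul_sum]
  exact sum_congr rfl fun i hi ↦ eval_nodal_erase hi (hx i hi)

theorem eval_derivative_derivative_nodal {x : F} (hx : ∀ i ∈ s, x ≠ v i) :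
    (derivative (derivative (nodal s v))).eval x =
      (nodal s v).eval x * ((∑ i ∈ s, 1 / (x - v i)) ^ 2 - ∑ i ∈ s, 1 / (x - v i) ^ 2) := by
  classical
  have summand (i : ι) (hi : i ∈ s) : (derivative (nodal (s.erase i) v)).eval x =
      (nodal s v).eval x * (1 / (x - v i) * ∑ m ∈ s, 1 / (x - v m) - 1 / (x - v i) ^ 2) := by
    rw [eval_derivative_nodal fun m hm ↦ hx m (mem_of_mem_erase hm),
      eval_nodal_erase hi (hx i hi), sum_erase_eq_sub hi, ← one_div_pow]
    ring
  rw [derivative_nodal, derivative_sum, eval_finsetSum, sum_congr rfl summand, ← mul_sum,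
    sum_sub_distrib, ← sum_mul, sq]

theorem eval_derivative_nodal_erase [DecidableEq ι] {i j : ι} (hi : i ∈ s) (hj : j ∈ s)
    (hij : v j ≠ v i) :
    (derivative (nodal (s.erase i) v)).eval (v j) =
      (nodal (s.erase j) v).eval (v j) / (v j - v i) := by
  have hji : j ∈ s.erase i := mem_erase.2 ⟨fun h ↦ hij (h ▸ rfl), hj⟩
  have hne : i ∈ s.erase j := mem_erase.2 ⟨fun h ↦ hij (h ▸ rfl), hi⟩
  rw [eval_nodal_derivative_eval_node_eq hji, erase_right_comm, eval_nodal_erase hne hij,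
    mul_one_div]

theorem eq_C_leadingCoeff_mul_nodal {p : F[X]} (hv : Set.InjOn v s) (hdeg : p.degree = #s)
    (hroot : ∀ i ∈ s, p.eval (v i) = 0) : p = C p.leadingCoeff * nodal s v := by
  have hp : p ≠ 0 := by rintro rfl; simp at hdeg
  refine eq_of_degree_le_of_eval_index_eq s hv hdeg.le ?_ ?_ fun i hi ↦ ?_
  · rw [degree_C_mul (leadingCoeff_ne_zero.2 hp), degree_nodal, hdeg]
  · rw [leadingCoeff_mul, leadingCoeff_C, nodal_monic.leadingCoeff, mul_one]
  · rw [hroot i hi, eval_mul, eval_nodal_at_node hi, mul_zero]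

theorem basis_eq_nodalWeight_smul_nodal_erase [DecidableEq ι] {i : ι} (hi : i ∈ s) :
    Lagrange.basis s v i = nodalWeight s v i • nodal (s.erase i) v := by
  rw [basis_eq_prod_sub_inv_mul_nodal_div hi, nodal_erase_eq_nodal_div hi, smul_eq_C_mul]

-- The Vandermonde matrix conjugates the matrices of `M` in the Lagrange and the monomial basis.
theorem det_eval_apply_basis {n : ℕ} {z : Fin n → F} (hz : Function.Injective z)
    (M : F[X] →ₗ[F] F[X]) (hM : ∀ k, (M (X ^ k)).natDegree ≤ k) :
    (Matrix.of fun j l ↦ (M (Lagrange.basis univ z l)).eval (z j)).det =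
      ∏ k ∈ range n, (M (X ^ k)).coeff k := by
  set A : Matrix (Fin n) (Fin n) F :=
    Matrix.of fun j l ↦ (M (Lagrange.basis univ z l)).eval (z j)
  set T : Matrix (Fin n) (Fin n) F := Matrix.of fun i k ↦ (M (X ^ (k : ℕ))).coeff i
  have intertwine : A * Matrix.vandermonde z = Matrix.vandermonde z * T := by
    rw [← Matrix.eval_matrixOfPolynomials_eq_vandermonde_mul_matrixOfPolynomials z
      (fun k ↦ M (X ^ (k : ℕ))) fun k ↦ hM k]
    ext j k
    have interpolation : (X ^ (k : ℕ) : F[X]) = ∑ l, z l ^ (k : ℕ) • Lagrange.basis univ z l := by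
      simpa [interpolate_apply, smul_eq_C_mul] using
        eq_interpolate (f := X ^ (k : ℕ)) hz.injOn (by simp)
    simp only [Matrix.mul_apply, Matrix.of_apply, interpolation, map_sum, map_smul,
      eval_finsetSum, eval_smul, smul_eq_mul, Matrix.vandermonde_apply, A]
    exact sum_congr rfl fun l _ ↦ mul_comm _ _
  have det_T : T.det = ∏ k ∈ range n, (M (X ^ k)).coeff k := by
    rw [Matrix.det_of_isUpperTriangular
      (Matrix.matrixOfPolynomials_blockTriangular _ fun k ↦ hM k), prod_range]
    rfl
  apply mul_right_cancel₀ (Matrix.det_vandermonde_ne_zero_iff.2 hz)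
  rw [← Matrix.det_mul, intertwine, Matrix.det_mul, det_T, mul_comm]

end Nodal

section LogEnergyHessian

open Polynomial Lagrange

variable {F ι : Type*} [Field F] [DecidableEq ι] {s : Finset ι} {z : ι → F}
  {σ τ : F[X]} {c : F}

theorem X_sub_C_mul_secondOrderOperator_nodal_erase
    (hode : secondOrderOperator σ τ c (nodal s z) = 0) {l : ι} (hl : l ∈ s) :
    (X - C (z l)) * secondOrderOperator σ τ c (nodal (s.erase l) z) +
      2 * σ * derivative (nodal (s.erase l) z) + τ * nodal (s.erase l) z = 0 := by
  rw [← secondOrderOperator_X_sub_C_mul, ← nodal_eq_mul_nodal_erase hl, hode]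

theorem eval_secondOrderOperator_nodal_erase_of_ne
    (hode : secondOrderOperator σ τ c (nodal s z) = 0) {j l : ι} (hj : j ∈ s) (hl : l ∈ s)
    (hjl : z j ≠ z l) :
    (secondOrderOperator σ τ c (nodal (s.erase l) z)).eval (z j) =
      (nodal (s.erase j) z).eval (z j) * (2 * σ.eval (z j)) * (-1 / (z j - z l) ^ 2) := by
  have hmem : j ∈ s.erase l := mem_erase.2 ⟨fun h ↦ hjl (h ▸ rfl), hj⟩
  have hsub : z j - z l ≠ 0 := sub_ne_zero.2 hjl
  have h := congrArg (eval (z j)) (X_sub_C_mul_secondOrderOperator_nodal_erase hode hl)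
  simp only [eval_add, eval_mul, eval_sub, eval_X, eval_C, eval_ofNat, eval_zero,
    eval_nodal_at_node hmem, eval_derivative_nodal_erase hl hj hjl] at h
  field_simp at h ⊢
  linear_combination h

theorem two_mul_eval_mul_sum_one_div_sub (hz : Set.InjOn z s)
    (hode : secondOrderOperator σ τ c (nodal s z) = 0) {j : ι} (hj : j ∈ s) :
    2 * σ.eval (z j) * ∑ m ∈ s.erase j, 1 / (z j - z m) = -τ.eval (z j) := by
  have hne : ∀ m ∈ s.erase j, z j ≠ z m := fun m hm h ↦
    (mem_erase.1 hm).1 (hz hj (mem_erase.1 hm).2 h).symm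
  have h := congrArg (eval (z j)) (X_sub_C_mul_secondOrderOperator_nodal_erase hode hj)
  simp only [eval_add, eval_mul, eval_sub, eval_X, eval_C, eval_ofNat, eval_zero,
    eval_derivative_nodal hne] at h
  apply mul_left_cancel₀ (eval_nodal_not_at_node hne)
  linear_combination h

theorem eval_secondOrderOperator_nodal_erase_self [NeZero (2 : F)] (hz : Set.InjOn z s)
    (hode : secondOrderOperator σ τ c (nodal s z) = 0) {j : ι} (hj : j ∈ s)
    (hσ : σ.eval (z j) ≠ 0) :
    (secondOrderOperator σ τ c (nodal (s.erase j) z)).eval (z j) =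
      (nodal (s.erase j) z).eval (z j) * (2 * σ.eval (z j)) *
        (∑ m ∈ s.erase j, 1 / (z j - z m) ^ 2 +
          ((derivative σ).eval (z j) * τ.eval (z j) - σ.eval (z j) * (derivative τ).eval (z j)) /
            (2 * σ.eval (z j) ^ 2)) := by
  have two_ne : (2 : F) ≠ 0 := two_ne_zero
  have hne : ∀ m ∈ s.erase j, z j ≠ z m := fun m hm h ↦
    (mem_erase.1 hm).1 (hz hj (mem_erase.1 hm).2 h).symm
  have h := congrArg (fun p ↦ (derivative p).eval (z j))
    (X_sub_C_mul_secondOrderOperator_nodal_erase hode hj)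
  simp only [derivative_add, derivative_mul, derivative_X_sub_C, derivative_ofNat, derivative_zero,
    eval_add, eval_mul, eval_sub, eval_X, eval_C, eval_one, eval_ofNat, eval_zero,
    eval_derivative_nodal hne, eval_derivative_derivative_nodal hne] at h
  have sum_eq : ∑ m ∈ s.erase j, 1 / (z j - z m) = -τ.eval (z j) / (2 * σ.eval (z j)) := by
    rw [eq_div_iff (mul_ne_zero two_ne hσ), ← two_mul_eval_mul_sum_one_div_sub hz hode hj,
      mul_comm]
  rw [sum_eq] at h
  field_simp at h ⊢
  apply mul_left_cancel₀ two_ne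
  linear_combination h

/-- The Hessian at `z` of the energy `-∑_{i < j} log |z i - z j| + ∑ j, V j (z j)` of charges in
external potentials `V j`, which enter only through `d j`, the second derivative of `V j` at
`z j`. -/
def logEnergyHessian [Fintype ι] (z d : ι → F) : Matrix ι ι F :=
  Matrix.of fun i j ↦
    if i = j then ∑ l ∈ univ.erase j, 1 / (z j - z l) ^ 2 + d j else -1 / (z i - z j) ^ 2

theorem of_eval_secondOrderOperator_basis [NeZero (2 : F)] [Fintype ι]
    (hz : Function.Injective z) (hσ : ∀ j, σ.eval (z j) ≠ 0)
    (hode : secondOrderOperator σ τ c (nodal univ z) = 0) :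
    (Matrix.of fun j l ↦ (secondOrderOperator σ τ c (Lagrange.basis univ z l)).eval (z j)) =
      Matrix.diagonal (fun j ↦ (nodalWeight univ z j)⁻¹) *
        (Matrix.diagonal (fun j ↦ 2 * σ.eval (z j)) * logEnergyHessian z fun j ↦
          ((derivative σ).eval (z j) * τ.eval (z j) - σ.eval (z j) * (derivative τ).eval (z j)) /
            (2 * σ.eval (z j) ^ 2)) *
        Matrix.diagonal (nodalWeight univ z) := by
  ext j l
  rw [Matrix.mul_diagonal, Matrix.diagonal_mul, Matrix.diagonal_mul, logEnergyHessian,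
    Matrix.of_apply, Matrix.of_apply, basis_eq_nodalWeight_smul_nodal_erase (mem_univ l), map_smul,
    eval_smul, smul_eq_mul, nodalWeight_eq_eval_nodal_erase_inv (i := j), inv_inv]
  split_ifs with hjl
  · subst hjl
    rw [eval_secondOrderOperator_nodal_erase_self hz.injOn hode (mem_univ j) (hσ j)]
    ring
  · rw [eval_secondOrderOperator_nodal_erase_of_ne hode (mem_univ j) (mem_univ l) (hz.ne hjl)]
    ring

theorem prod_mul_det_logEnergyHessian [NeZero (2 : F)] {n : ℕ} {z : Fin n → F}
    (hσdeg : σ.natDegree ≤ 2) (hτdeg : τ.natDegree ≤ 1) (hz : Function.Injective z)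
    (hσ : ∀ j, σ.eval (z j) ≠ 0) (hode : secondOrderOperator σ τ c (nodal univ z) = 0) :
    (∏ j, 2 * σ.eval (z j)) * (logEnergyHessian z fun j ↦
        ((derivative σ).eval (z j) * τ.eval (z j) - σ.eval (z j) * (derivative τ).eval (z j)) /
          (2 * σ.eval (z j) ^ 2)).det =
      ∏ k ∈ range n, secondOrderSymbol σ τ c k := by
  have weight_ne : ∏ j, nodalWeight univ z j ≠ 0 :=
    prod_ne_zero_iff.2 fun j hj ↦ nodalWeight_ne_zero hz.injOn hj
  have hdet := det_eval_apply_basis hz (secondOrderOperator σ τ c) fun k ↦ by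
    simpa using natDegree_secondOrderOperator_le hσdeg hτdeg (c := c) (X ^ k)
  simp only [of_eval_secondOrderOperator_basis hz hσ hode, Matrix.det_mul, Matrix.det_diagonal,
    prod_inv_distrib, coeff_secondOrderOperator_X_pow hσdeg hτdeg] at hdet
  rw [← hdet]
  field_simp

end LogEnergyHessian

section JacobiOperator

open Polynomial

variable {R : Type*} [CommRing R] {n : ℕ} {α β : R}

/-- The Jacobi differential operator
`q ↦ (1 - x²) q'' + (β - α - (α + β + 2) x) q' + n (n + α + β + 1) q`, which annihilates the Jacobi
polynomial of degree `n`. -/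
noncomputable def jacobiOperator (n : ℕ) (α β : R) : R[X] →ₗ[R] R[X] :=
  secondOrderOperator (1 - X ^ 2) (C (β - α) - C (α + β + 2) * X) (n * (n + α + β + 1))

theorem natDegree_one_sub_X_sq_le : (1 - X ^ 2 : R[X]).natDegree ≤ 2 := by compute_degree

theorem natDegree_C_sub_C_mul_X_le (a b : R) : (C a - C b * X).natDegree ≤ 1 := by compute_degree

theorem secondOrderSymbol_jacobi (k : ℕ) :
    secondOrderSymbol (1 - X ^ 2) (C (β - α) - C (α + β + 2) * X) (n * (n + α + β + 1)) k =
      (n - k) * (n + α + β + 1 + k) := by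
  simp only [secondOrderSymbol, coeff_sub, coeff_C_mul, coeff_X_one, coeff_C_succ, coeff_one,
    coeff_X_pow]
  norm_num
  ring

theorem prod_secondOrderSymbol_jacobi :
    ∏ k ∈ range n, secondOrderSymbol (1 - X ^ 2) (C (β - α) - C (α + β + 2) * X)
        (n * (n + α + β + 1)) k =
      n.factorial * ∏ k ∈ range n, ((n : R) + α + β + 1 + k) := by
  simp only [secondOrderSymbol_jacobi, prod_mul_distrib, prod_range_natCast_sub]
  rw [← Nat.descFactorial_eq_prod_range, Nat.descFactorial_self]

end JacobiOperator

section JacobiWeight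

open Polynomial

variable {α β : ℝ}

/-- The weight on `(-1, 1)` with respect to which Jacobi polynomials are orthogonal. -/
noncomputable def jacobiWeight (α β x : ℝ) : ℝ := (1 - x) ^ α * (1 + x) ^ β

theorem jacobiWeight_pos {x : ℝ} (hx : x ∈ Set.Ioo (-1) 1) : 0 < jacobiWeight α β x :=
  mul_pos (rpow_pos_of_pos (by linarith [hx.2]) α) (rpow_pos_of_pos (by linarith [hx.1]) β)

theorem continuousOn_jacobiWeight : ContinuousOn (jacobiWeight α β) (Set.Ioo (-1) 1) := by
  refine .mul (.rpow_const (by fun_prop) fun x hx ↦ .inl ?_)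
    (.rpow_const (by fun_prop) fun x hx ↦ .inl ?_)
  · linarith [hx.2]
  · linarith [hx.1]

theorem continuous_jacobiWeight (hα : 0 ≤ α) (hβ : 0 ≤ β) : Continuous (jacobiWeight α β) :=
  .mul (.rpow_const (by fun_prop) fun _ ↦ .inr hα) (.rpow_const (by fun_prop) fun _ ↦ .inr hβ)

theorem intervalIntegrable_jacobiWeight (hα : -1 < α) (hβ : -1 < β) :
    IntervalIntegrable (jacobiWeight α β) volume (-1) 1 := by
  have left_half : IntervalIntegrable (jacobiWeight α β) volume (-1) 0 := by
    have singular : IntervalIntegrable (fun x : ℝ ↦ (1 + x) ^ β) volume (-1) 0 := by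
      simpa using
        (intervalIntegral.intervalIntegrable_rpow' (a := 0) (b := 1) hβ).comp_add_left 1
    refine singular.continuousOn_mul (.rpow_const (by fun_prop) fun x hx ↦ .inl ?_)
    rw [Set.uIcc_of_le (by norm_num)] at hx
    linarith [hx.2]
  have right_half : IntervalIntegrable (jacobiWeight α β) volume 0 1 := by
    have singular : IntervalIntegrable (fun x : ℝ ↦ (1 - x) ^ α) volume 0 1 := by
      simpa using
        (intervalIntegral.intervalIntegrable_rpow' (a := 1) (b := 0) hα).comp_sub_left 1
    refine singular.mul_continuousOn (.rpow_const (by fun_prop) fun x hx ↦ .inl ?_)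
    rw [Set.uIcc_of_le zero_le_one] at hx
    linarith [hx.1]
  exact left_half.trans right_half

theorem intervalIntegrable_eval_mul_jacobiWeight (hα : -1 < α) (hβ : -1 < β) (q : ℝ[X]) :
    IntervalIntegrable (fun x ↦ q.eval x * jacobiWeight α β x) volume (-1) 1 :=
  (intervalIntegrable_jacobiWeight hα hβ).continuousOn_mul q.continuous.continuousOn

theorem hasDerivAt_jacobiWeight_add_one {x : ℝ} (hx : x ∈ Set.Ioo (-1) 1) :
    HasDerivAt (jacobiWeight (α + 1) (β + 1))
      ((β - α - (α + β + 2) * x) * jacobiWeight α β x) x := by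
  have hsub : 0 < 1 - x := by linarith [hx.2]
  have hadd : 0 < 1 + x := by linarith [hx.1]
  have deriv_sub := ((hasDerivAt_id x).const_sub 1).rpow_const (p := α + 1) (.inl hsub.ne')
  have deriv_add := ((hasDerivAt_id x).const_add 1).rpow_const (p := β + 1) (.inl hadd.ne')
  refine (deriv_sub.mul deriv_add).congr_deriv ?_
  simp only [jacobiWeight, id, add_sub_cancel_right, rpow_add_one hsub.ne', rpow_add_one hadd.ne']
  ring

theorem jacobiWeight_add_one {x : ℝ} (hx : x ∈ Set.Ioo (-1) 1) :
    jacobiWeight (α + 1) (β + 1) x = (1 - x ^ 2) * jacobiWeight α β x := by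
  have hsub : 1 - x ≠ 0 := by linarith [hx.2]
  have hadd : 1 + x ≠ 0 := by linarith [hx.1]
  rw [jacobiWeight, jacobiWeight, rpow_add_one hsub, rpow_add_one hadd]
  ring

-- Abel's identity: the weighted Wronskian of `p` and `q` is a primitive of the difference of the
-- two sides, and it vanishes at the endpoints.
theorem integral_jacobiOperator_mul (n : ℕ) (hα : -1 < α) (hβ : -1 < β) (p q : ℝ[X]) :
    ∫ x in (-1)..1, (jacobiOperator n α β p * q).eval x * jacobiWeight α β x =
      ∫ x in (-1)..1, (p * jacobiOperator n α β q).eval x * jacobiWeight α β x := by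
  have integrable := intervalIntegrable_eval_mul_jacobiWeight hα hβ
  have wronskian_deriv (x : ℝ) (hx : x ∈ Set.Ioo (-1) 1) :
      HasDerivAt (fun y ↦ (derivative p * q - p * derivative q).eval y *
          jacobiWeight (α + 1) (β + 1) y)
        ((jacobiOperator n α β p * q - p * jacobiOperator n α β q).eval x *
          jacobiWeight α β x) x := by
    refine ((Polynomial.hasDerivAt _ x).mul (hasDerivAt_jacobiWeight_add_one hx)).congr_deriv ?_
    simp only [jacobiWeight_add_one hx, jacobiOperator, secondOrderOperator_apply, derivative_sub,
      derivative_mul, eval_add, eval_sub, eval_mul, eval_pow, eval_one, eval_X, eval_C]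
    ring
  have wronskian_cont : Continuous fun y ↦ (derivative p * q - p * derivative q).eval y *
      jacobiWeight (α + 1) (β + 1) y :=
    (Polynomial.continuous _).mul (continuous_jacobiWeight (by linarith) (by linarith))
  have ftc := intervalIntegral.integral_eq_sub_of_hasDerivAt_of_le (by norm_num)
    wronskian_cont.continuousOn wronskian_deriv (integrable _)
  have vanish_one : jacobiWeight (α + 1) (β + 1) 1 = 0 := by
    simp [jacobiWeight, zero_rpow (by linarith : α + 1 ≠ 0)]
  have vanish_neg_one : jacobiWeight (α + 1) (β + 1) (-1) = 0 := by
    simp [jacobiWeight, zero_rpow (by linarith : β + 1 ≠ 0)]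
  simp only [vanish_one, vanish_neg_one, mul_zero, sub_zero, eval_sub, sub_mul] at ftc
  rwa [intervalIntegral.integral_sub (integrable _) (integrable _), sub_eq_zero] at ftc

theorem eq_zero_of_integral_mul_self_jacobiWeight (hα : -1 < α) (hβ : -1 < β) {q : ℝ[X]}
    (hq : ∫ x in (-1)..1, (q * q).eval x * jacobiWeight α β x = 0) : q = 0 := by
  have integrable := (intervalIntegrable_iff_integrableOn_Ioo_of_le (by norm_num)).1
    (intervalIntegrable_eval_mul_jacobiWeight hα hβ (q * q))
  have nonneg : 0 ≤ᵐ[volume.restrict (Set.Ioo (-1) 1)]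
      fun x ↦ (q * q).eval x * jacobiWeight α β x := by
    filter_upwards [ae_restrict_mem measurableSet_Ioo] with x hx
    rw [eval_mul]
    exact mul_nonneg (mul_self_nonneg _) (jacobiWeight_pos hx).le
  rw [intervalIntegral.integral_of_le (by norm_num), integral_Ioc_eq_integral_Ioo,
    setIntegral_eq_zero_iff_of_nonneg_ae nonneg integrable] at hq
  have eqOn_zero := Measure.eqOn_Ioo_of_ae_eq volume hq
    ((q * q).continuous.continuousOn.mul continuousOn_jacobiWeight) continuousOn_const
  refine q.eq_zero_of_infinite_isRoot ((Set.Ioo_infinite (neg_lt_self one_pos)).mono fun x hx ↦ ?_)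
  simpa [(jacobiWeight_pos hx).ne'] using eqOn_zero hx

theorem jacobiOperator_eq_zero_of_orthogonal (hα : -1 < α) (hβ : -1 < β) {n : ℕ} (hn : n ≠ 0)
    {P : ℝ[X]} (hdeg : P.natDegree = n)
    (horth : ∀ Q : ℝ[X], Q.natDegree < n →
      ∫ x in Set.Ioo (-1 : ℝ) 1, P.eval x * Q.eval x * (1 - x) ^ α * (1 + x) ^ β = 0) :
    jacobiOperator n α β P = 0 := by
  have hτ := natDegree_C_sub_C_mul_X_le (β - α) (α + β + 2)
  have natDegree_lt : (jacobiOperator n α β (jacobiOperator n α β P)).natDegree < n := by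
    calc (jacobiOperator n α β (jacobiOperator n α β P)).natDegree
        ≤ (jacobiOperator n α β P).natDegree :=
          natDegree_secondOrderOperator_le natDegree_one_sub_X_sq_le hτ _
      _ < P.natDegree := natDegree_secondOrderOperator_lt natDegree_one_sub_X_sq_le hτ
          (hdeg ▸ hn) (by rw [secondOrderSymbol_jacobi, hdeg, sub_self, zero_mul])
      _ = n := hdeg
  apply eq_zero_of_integral_mul_self_jacobiWeight hα hβ
  rw [integral_jacobiOperator_mul _ hα hβ, intervalIntegral.integral_of_le (by norm_num),
    integral_Ioc_eq_integral_Ioo, ← horth _ natDegree_lt]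
  simp only [jacobiWeight, eval_mul, mul_assoc]

end JacobiWeight

section JacobiDeterminant

open Polynomial Lagrange

variable {K : Type*} [Field K] {n : ℕ} {α β : K}

theorem prod_two_mul_one_sub_sq (z : Fin n → K) :
    ∏ j, 2 * (1 - z j ^ 2) = (-2) ^ n * ((nodal univ z).eval 1 * (nodal univ z).eval (-1)) := by
  rw [eval_nodal, eval_nodal, ← prod_mul_distrib, ← Fin.prod_const, ← prod_mul_distrib]
  exact prod_congr rfl fun j _ ↦ by ring

theorem jacobiOperator_nodal_eq_zero {P : K[X]} (hdeg : P.degree = n)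
    (hode : jacobiOperator n α β P = 0) {z : Fin n → K} (hz : Function.Injective z)
    (hroot : ∀ j, P.eval (z j) = 0) : jacobiOperator n α β (nodal univ z) = 0 := by
  have hP : P = P.leadingCoeff • nodal univ z := by
    rw [smul_eq_C_mul]
    exact eq_C_leadingCoeff_mul_nodal hz.injOn (by simpa using hdeg) fun j _ ↦ hroot j
  have hP_ne : P ≠ 0 := by rintro rfl; simp at hdeg
  rw [hP, map_smul] at hode
  exact (smul_eq_zero.1 hode).resolve_left (leadingCoeff_ne_zero.2 hP_ne)

variable [CharZero K]

-- For `r = 1` the exponent `γ` is `α`, for `r = -1` it is `β`.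
theorem eval_mul_prod_of_jacobiOperator_eq_zero {p : K[X]} (hp : p.Monic) (hdeg : p.natDegree = n)
    (hode : jacobiOperator n α β p = 0) {r γ : K} (hr : r ^ 2 = 1)
    (hγ : 2 * r * (γ + 1) = (α + β + 2) * r - (β - α)) :
    p.eval r * ∏ k ∈ range n, ((n : K) + α + β + 1 + k) =
      (2 * r) ^ n * ∏ k ∈ range n, (γ + 1 + k) := by
  have h := eval_mul_prod_secondOrderSymbol natDegree_one_sub_X_sq_le
    (natDegree_C_sub_C_mul_X_le _ _) (r := r) (by simp [hr]) hode
  have factor (k : ℕ) : -((k : K) * (derivative (1 - X ^ 2)).eval r +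
      (C (β - α) - C (α + β + 2) * X).eval r) = 2 * r * (γ + 1 + k) := by
    simp only [derivative_sub, derivative_one, derivative_X_sq, eval_sub, eval_mul, eval_C, eval_X,
      eval_zero]
    linear_combination -hγ
  simp only [hdeg, prod_secondOrderSymbol_jacobi, hp.leadingCoeff, factor, prod_mul_distrib,
    prod_const, card_range] at h
  apply mul_left_cancel₀ (Nat.cast_ne_zero.2 n.factorial_ne_zero : (n.factorial : K) ≠ 0)
  linear_combination h

theorem jacobi_potential_eq {x : K} (hx : x ^ 2 ≠ 1) :
    ((derivative (1 - X ^ 2)).eval x * (C (β - α) - C (α + β + 2) * X).eval x -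
        (1 - X ^ 2 : K[X]).eval x * (derivative (C (β - α) - C (α + β + 2) * X)).eval x) /
        (2 * (1 - X ^ 2 : K[X]).eval x ^ 2) =
      (α + 1) / 2 * (1 / (1 - x) ^ 2) + (β + 1) / 2 * (1 / (1 + x) ^ 2) := by
  have factored_ne_zero : (1 - x) * (1 + x) ≠ 0 := fun h ↦ hx (by linear_combination -h)
  obtain ⟨hsub, hadd⟩ := mul_ne_zero_iff.1 factored_ne_zero
  simp only [derivative_sub, derivative_one, derivative_X_sq, derivative_C, derivative_C_mul,
    derivative_X, eval_sub, eval_mul, eval_C, eval_X, eval_pow, eval_one, eval_zero]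
  rw [show 1 - x ^ 2 = (1 - x) * (1 + x) by ring]
  field_simp
  ring

theorem prod_mul_det_logEnergyHessian_jacobi {z : Fin n → K} (hz : Function.Injective z)
    (hz_sq : ∀ j, z j ^ 2 ≠ 1) (hode : jacobiOperator n α β (nodal univ z) = 0) :
    (∏ j, 2 * (1 - z j ^ 2)) * (logEnergyHessian z fun j ↦
        (α + 1) / 2 * (1 / (1 - z j) ^ 2) + (β + 1) / 2 * (1 / (1 + z j) ^ 2)).det =
      n.factorial * ∏ k ∈ range n, ((n : K) + α + β + 1 + k) := by
  have hσ (j : Fin n) : (1 - X ^ 2 : K[X]).eval (z j) ≠ 0 := by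
    simpa [sub_eq_zero] using (hz_sq j).symm
  have h := prod_mul_det_logEnergyHessian natDegree_one_sub_X_sq_le
    (natDegree_C_sub_C_mul_X_le _ _) hz hσ hode
  simp only [prod_secondOrderSymbol_jacobi, jacobi_potential_eq (hz_sq _)] at h
  simpa only [eval_sub, eval_one, eval_pow, eval_X] using h

theorem jacobi_matrix_det_general {P : K[X]} (hdeg : P.degree = n)
    (hode : jacobiOperator n α β P = 0) (hα : ∏ k ∈ range n, (α + 1 + k) ≠ 0)
    (hβ : ∏ k ∈ range n, (β + 1 + k) ≠ 0) {z : Fin n → K} (hz : Function.Injective z)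
    (hroot : ∀ j, P.eval (z j) = 0) :
    (logEnergyHessian z fun j ↦
        (α + 1) / 2 * (1 / (1 - z j) ^ 2) + (β + 1) / 2 * (1 / (1 + z j) ^ 2)).det =
      n.factorial / 2 ^ (3 * n) * (∏ k ∈ range n, ((n : K) + α + β + 1 + k)) ^ 3 /
        ((∏ k ∈ range n, (α + 1 + k)) * ∏ k ∈ range n, (β + 1 + k)) := by
  have hnodal := jacobiOperator_nodal_eq_zero hdeg hode hz hroot
  have value {r γ : K} := eval_mul_prod_of_jacobiOperator_eq_zero (r := r) (γ := γ)
    nodal_monic (by simp) hnodal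
  have value_one := value (r := 1) (γ := α) (by ring) (by ring)
  have value_neg_one := value (r := -1) (γ := β) (by ring) (by ring)
  have nodes_sq_ne_one (j : Fin n) : z j ^ 2 ≠ 1 := by
    intro h
    have hj := eval_nodal_at_node (v := z) (mem_univ j)
    rcases sq_eq_one_iff.1 h with h_one | h_neg_one
    · rw [← h_one, hj, zero_mul] at value_one
      simp [h_one, hα] at value_one
    · rw [← h_neg_one, hj, zero_mul] at value_neg_one
      simp [h_neg_one, hβ] at value_neg_one
  have hdet := prod_mul_det_logEnergyHessian_jacobi hz nodes_sq_ne_one hnodal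
  rw [prod_two_mul_one_sub_sq] at hdet
  set D := (logEnergyHessian z _).det
  set G := ∏ k ∈ range n, ((n : K) + α + β + 1 + k)
  set A := ∏ k ∈ range n, (α + 1 + k)
  set B := ∏ k ∈ range n, (β + 1 + k)
  have cleared : n.factorial * G ^ 3 = D * (2 ^ (3 * n) * (A * B)) := by
    calc n.factorial * G ^ 3
        = D * ((-2) ^ n * (((nodal univ z).eval 1 * G) * ((nodal univ z).eval (-1) * G))) := by
          linear_combination -(G ^ 2) * hdet
      _ = D * (((-2) * (2 * 1) * (2 * -1)) ^ n * (A * B)) := by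
          rw [value_one, value_neg_one, mul_pow (-2 * (2 * 1)), mul_pow (-2)]
          ring
      _ = D * (2 ^ (3 * n) * (A * B)) := by
          rw [pow_mul]
          norm_num
  rw [div_mul_eq_mul_div, div_div, cleared, mul_div_cancel_right₀]
  exact mul_ne_zero (pow_ne_zero _ two_ne_zero) (mul_ne_zero hα hβ)

end JacobiDeterminant

theorem jacobi_matrix_det
    (N : ℕ) (hN : 1 ≤ N) (α β : ℝ) (hα : -1 < α) (hβ : -1 < β)
    (P : Polynomial ℝ) (hPdeg : P.natDegree = N)
    (hPorth : ∀ Q : Polynomial ℝ, Q.natDegree < N →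
      ∫ x in Set.Ioo (-1 : ℝ) 1,
        P.eval x * Q.eval x * (1 - x) ^ α * (1 + x) ^ β = 0)
    (hPone : P.eval 1 = (∏ j ∈ Finset.range N, (α + 1 + j)) / (N.factorial : ℝ))
    (z : Fin N → ℝ) (hzmono : StrictMono z)
    (hzroot : ∀ i, P.eval (z i) = 0)
    (hzmem : ∀ i, z i ∈ Set.Ioo (-1 : ℝ) 1)
    (S : Matrix (Fin N) (Fin N) ℝ)
    (hS : S = Matrix.of fun i j =>
      if i = j then
        (∑ l ∈ Finset.univ.erase j, 1 / (z j - z l) ^ 2) +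
          (α + 1) / 2 * (1 / (1 - z j) ^ 2) + (β + 1) / 2 * (1 / (1 + z j) ^ 2)
      else -1 / (z i - z j) ^ 2)
    : S.det = (N.factorial : ℝ) / 2 ^ (3 * N) *
      (∏ j ∈ Finset.range N, ((N : ℝ) + α + β + 1 + j)) ^ 3 /
      ((∏ j ∈ Finset.range N, (α + 1 + j)) * (∏ j ∈ Finset.range N, (β + 1 + j))) := by
  have hode := jacobiOperator_eq_zero_of_orthogonal hα hβ (by lia) hPdeg hPorth
  have hdeg : P.degree = N := (Polynomial.degree_eq_iff_natDegree_eq_of_pos hN).2 hPdeg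
  have pochhammer_ne_zero {γ : ℝ} (hγ : -1 < γ) : ∏ k ∈ range N, (γ + 1 + k) ≠ 0 :=
    prod_ne_zero_iff.2 fun k _ ↦ by linarith [k.cast_nonneg (α := ℝ)]
  rw [hS, ← jacobi_matrix_det_general hdeg hode (pochhammer_ne_zero hα) (pochhammer_ne_zero hβ)
    hzmono.injective hzroot]
  simp only [logEnergyHessian, add_assoc]
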